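/- Let n, d, q be positive integers, let κ, ν, λ be positive reals, let A ∈ ℝ^{n×n}, let Z₀ ∈ ℝ^{n×n} be such that A + Z₀ is symmetric with all entries nonnegative, and let W₀ be a collection of n real d×q matrices satisfying ‖W₀‖_F ≤ √(νκ) / (2λ(√n + 1)). Then for all Z ∈ ℝ^{n×n} and all collections W of n real d×q matrices, R(Z,W) = (ν/2)‖Z‖_F² + (κ/2)‖W‖_F² + λ·(2·Q(W, Λ(Z), W₀) + Q(W, Λ(A+Z₀), W)) ≥ 0. -/

import Mathlib

open scoped BigOperators
open Matrix

/-- Squared Frobenius norm of a matrix. -/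
noncomputable def frobSq {n m : ℕ} (M : Matrix (Fin n) (Fin m) ℝ) : ℝ :=
  ∑ i, ∑ j, (M i j) ^ 2

/-- Frobenius norm of a matrix. -/
noncomputable def frob {n m : ℕ} (M : Matrix (Fin n) (Fin m) ℝ) : ℝ :=
  Real.sqrt (frobSq M)

/-- Squared Frobenius norm of a collection of `n` matrices. -/
noncomputable def collFrobSq {n d q : ℕ} (W : Fin n → Matrix (Fin d) (Fin q) ℝ) : ℝ :=
  ∑ i, frobSq (W i)

/-- Frobenius norm of a collection of `n` matrices. -/
noncomputable def collFrob {n d q : ℕ} (W : Fin n → Matrix (Fin d) (Fin q) ℝ) : ℝ :=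
  Real.sqrt (collFrobSq W)

/-- Diagonal degree matrix of a square matrix. -/
noncomputable def degMatrix {n : ℕ} (Z : Matrix (Fin n) (Fin n) ℝ) : Matrix (Fin n) (Fin n) ℝ :=
  Matrix.diagonal (fun i => ∑ j, Z i j)

/-- Graph Laplacian of a square matrix. -/
noncomputable def lap {n : ℕ} (Z : Matrix (Fin n) (Fin n) ℝ) : Matrix (Fin n) (Fin n) ℝ :=
  degMatrix Z - Z

/-- The bilinear form `Q(W, M, V) = ∑ i j, M i j * Tr((W i)ᵀ (V j))`. -/
noncomputable def QForm {n d q : ℕ} (W : Fin n → Matrix (Fin d) (Fin q) ℝ)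
    (M : Matrix (Fin n) (Fin n) ℝ) (V : Fin n → Matrix (Fin d) (Fin q) ℝ) : ℝ :=
  ∑ i, ∑ j, M i j * ((W i)ᵀ * V j).trace

/-
The Laplacian acts through differences: `Q(W, Λ(M), V) = ∑ i j, M i j * ⟪W i, V i - V j⟫`.
If the weights `M` are nonnegative with equal row and column sums, then symmetrizing gives
`2 Q(W, Λ(M), W) = ∑ i j, M i j * ‖W i - W j‖² ≥ 0`. For arbitrary `Z`, Cauchy–Schwarz together with
`∑ j, ‖V i - V j‖² ≤ n ‖V‖²` gives `|Q(W, Λ(Z), V)| ≤ √n ‖Z‖ ‖W‖ ‖V‖`, and the condition on `W₀`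
lets the terms `(ν/2)‖Z‖² + (κ/2)‖W‖² ≥ √(νκ) ‖Z‖ ‖W‖` absorb the only indefinite term.
-/

lemma frobSq_nonneg {n m : ℕ} (X : Matrix (Fin n) (Fin m) ℝ) : 0 ≤ frobSq X :=
  Finset.sum_nonneg fun _ _ => Finset.sum_nonneg fun _ _ => sq_nonneg _

lemma collFrobSq_nonneg {n d q : ℕ} (W : Fin n → Matrix (Fin d) (Fin q) ℝ) : 0 ≤ collFrobSq W :=
  Finset.sum_nonneg fun _ _ => frobSq_nonneg _

lemma frob_nonneg {n m : ℕ} (X : Matrix (Fin n) (Fin m) ℝ) : 0 ≤ frob X :=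
  Real.sqrt_nonneg _

lemma collFrob_nonneg {n d q : ℕ} (W : Fin n → Matrix (Fin d) (Fin q) ℝ) : 0 ≤ collFrob W :=
  Real.sqrt_nonneg _

lemma sq_frob {n m : ℕ} (X : Matrix (Fin n) (Fin m) ℝ) : frob X ^ 2 = frobSq X :=
  Real.sq_sqrt (frobSq_nonneg X)

lemma sq_collFrob {n d q : ℕ} (W : Fin n → Matrix (Fin d) (Fin q) ℝ) :
    collFrob W ^ 2 = collFrobSq W :=
  Real.sq_sqrt (collFrobSq_nonneg W)

lemma trace_transpose_mul_eq_sum {m n R : Type*} [Fintype m] [Fintype n]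
    [NonUnitalNonAssocSemiring R] (X Y : Matrix m n R) :
    (Xᵀ * Y).trace = ∑ i, ∑ j, X i j * Y i j := by
  rw [Finset.sum_comm]
  rfl

lemma sq_trace_transpose_mul_le {n m : ℕ} (X Y : Matrix (Fin n) (Fin m) ℝ) :
    (Xᵀ * Y).trace ^ 2 ≤ frobSq X * frobSq Y := by
  simp only [trace_transpose_mul_eq_sum, frobSq, ← Fintype.sum_prod_type']
  exact Finset.sum_mul_sq_le_sq_mul_sq _ _ _

lemma two_mul_trace_transpose_mul_sub {n m : ℕ} (X Y : Matrix (Fin n) (Fin m) ℝ) :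
    2 * (Xᵀ * (X - Y)).trace = frobSq X - frobSq Y + frobSq (X - Y) := by
  simp only [trace_transpose_mul_eq_sum, frobSq, Matrix.sub_apply, Finset.mul_sum,
    ← Finset.sum_sub_distrib, ← Finset.sum_add_distrib]
  exact Finset.sum_congr rfl fun i _ => Finset.sum_congr rfl fun j _ => by ring

lemma QForm_lap {n d q : ℕ} (W : Fin n → Matrix (Fin d) (Fin q) ℝ)
    (M : Matrix (Fin n) (Fin n) ℝ) (V : Fin n → Matrix (Fin d) (Fin q) ℝ) :
    QForm W (lap M) V = ∑ i, ∑ j, M i j * ((W i)ᵀ * (V i - V j)).trace := by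
  refine Finset.sum_congr rfl fun i _ => ?_
  simp only [lap, degMatrix, Matrix.sub_apply, diagonal_apply, Matrix.mul_sub, trace_sub, sub_mul,
    mul_sub, ite_mul, zero_mul, Finset.sum_sub_distrib, Finset.sum_ite_eq, Finset.mem_univ,
    if_true, Finset.sum_mul]

lemma sum_mul_sub_eq_zero_of_balanced {ι R : Type*} [Fintype ι] [NonUnitalNonAssocRing R]
    {S : Matrix ι ι R} (hS : ∀ i, ∑ j, S i j = ∑ j, S j i) (f : ι → R) :
    ∑ i, ∑ j, S i j * (f i - f j) = 0 := by
  simp only [mul_sub, Finset.sum_sub_distrib]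
  rw [sub_eq_zero, Finset.sum_comm (f := fun i j => S i j * f j)]
  simp only [← Finset.sum_mul, hS]

lemma two_mul_QForm_lap_self {n d q : ℕ} {S : Matrix (Fin n) (Fin n) ℝ}
    (hS : ∀ i, ∑ j, S i j = ∑ j, S j i) (W : Fin n → Matrix (Fin d) (Fin q) ℝ) :
    2 * QForm W (lap S) W = ∑ i, ∑ j, S i j * frobSq (W i - W j) := by
  simp only [QForm_lap, Finset.mul_sum, mul_left_comm (2 : ℝ), two_mul_trace_transpose_mul_sub,
    mul_add, Finset.sum_add_distrib,
    sum_mul_sub_eq_zero_of_balanced hS (fun i => frobSq (W i)), zero_add]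

lemma QForm_lap_self_nonneg {n d q : ℕ} {S : Matrix (Fin n) (Fin n) ℝ}
    (hS : ∀ i, ∑ j, S i j = ∑ j, S j i) (hpos : ∀ i j, 0 ≤ S i j)
    (W : Fin n → Matrix (Fin d) (Fin q) ℝ) : 0 ≤ QForm W (lap S) W := by
  have hsum : 0 ≤ ∑ i, ∑ j, S i j * frobSq (W i - W j) :=
    Finset.sum_nonneg fun i _ => Finset.sum_nonneg fun j _ =>
      mul_nonneg (hpos i j) (frobSq_nonneg _)
  linarith [two_mul_QForm_lap_self hS W]

-- The left-hand side is the Laplacian form of the star graph centred at `i`: its eigenvalues are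
-- at most the number of vertices.
lemma sum_sub_sq_le_card_mul_sum_sq {ι R : Type*} [Fintype ι] [CommRing R] [LinearOrder R]
    [IsStrictOrderedRing R] (x : ι → R) (i : ι) :
    ∑ j, (x i - x j) ^ 2 ≤ Fintype.card ι * ∑ j, x j ^ 2 := by
  classical
  set s := Finset.univ.erase i
  have hcard : (Fintype.card ι : R) = s.card + 1 := by
    exact_mod_cast (Finset.card_erase_add_one (Finset.mem_univ i)).symm
  have hcauchy : (∑ j ∈ s, x j) ^ 2 ≤ s.card * ∑ j ∈ s, x j ^ 2 := sq_sum_le_card_mul_sum_sq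
  have hexpand : ∑ j ∈ s, (x i - x j) ^ 2
      = s.card * x i ^ 2 - 2 * x i * ∑ j ∈ s, x j + ∑ j ∈ s, x j ^ 2 := by
    simp only [sub_sq, Finset.sum_add_distrib, Finset.sum_sub_distrib, Finset.sum_const,
      nsmul_eq_mul, ← Finset.mul_sum]
  rw [← Finset.add_sum_erase _ _ (Finset.mem_univ i),
    ← Finset.add_sum_erase _ (fun j => x j ^ 2) (Finset.mem_univ i), hcard, hexpand]
  linear_combination hcauchy + sq_nonneg (x i + ∑ j ∈ s, x j)

lemma collFrobSq_eq_sum_entries {n d q : ℕ} (W : Fin n → Matrix (Fin d) (Fin q) ℝ) :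
    collFrobSq W = ∑ p : Fin d × Fin q, ∑ i, W i p.1 p.2 ^ 2 := by
  simp only [collFrobSq, frobSq, Fintype.sum_prod_type]
  rw [Finset.sum_comm]
  exact Finset.sum_congr rfl fun _ _ => Finset.sum_comm

lemma collFrobSq_const_sub_le {n d q : ℕ} (V : Fin n → Matrix (Fin d) (Fin q) ℝ) (i : Fin n) :
    collFrobSq (fun j => V i - V j) ≤ n * collFrobSq V := by
  rw [collFrobSq_eq_sum_entries, collFrobSq_eq_sum_entries, Finset.mul_sum]
  refine Finset.sum_le_sum fun p _ => ?_
  simpa only [Matrix.sub_apply, Fintype.card_fin] using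
    sum_sub_sq_le_card_mul_sum_sq (fun j => V j p.1 p.2) i

lemma sq_QForm_lap_le {n d q : ℕ} (W : Fin n → Matrix (Fin d) (Fin q) ℝ)
    (Z : Matrix (Fin n) (Fin n) ℝ) (V : Fin n → Matrix (Fin d) (Fin q) ℝ) :
    QForm W (lap Z) V ^ 2 ≤ frobSq Z * (collFrobSq W * (n * collFrobSq V)) := by
  let T : Matrix (Fin n) (Fin n) ℝ := of fun i j => ((W i)ᵀ * (V i - V j)).trace
  have hT : frobSq T ≤ collFrobSq W * (n * collFrobSq V) :=
    calc frobSq T ≤ ∑ i, ∑ j, frobSq (W i) * frobSq (V i - V j) :=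
          Finset.sum_le_sum fun i _ => Finset.sum_le_sum fun j _ => sq_trace_transpose_mul_le _ _
      _ = ∑ i, frobSq (W i) * collFrobSq (fun j => V i - V j) := by
          simp only [collFrobSq, Finset.mul_sum]
      _ ≤ ∑ i, frobSq (W i) * (n * collFrobSq V) :=
          Finset.sum_le_sum fun i _ =>
            mul_le_mul_of_nonneg_left (collFrobSq_const_sub_le V i) (frobSq_nonneg _)
      _ = collFrobSq W * (n * collFrobSq V) := (Finset.sum_mul ..).symm
  calc QForm W (lap Z) V ^ 2 = (Zᵀ * T).trace ^ 2 := by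
        rw [QForm_lap, trace_transpose_mul_eq_sum]; rfl
    _ ≤ frobSq Z * frobSq T := sq_trace_transpose_mul_le Z T
    _ ≤ frobSq Z * (collFrobSq W * (n * collFrobSq V)) :=
        mul_le_mul_of_nonneg_left hT (frobSq_nonneg Z)

lemma abs_QForm_lap_le {n d q : ℕ} (W : Fin n → Matrix (Fin d) (Fin q) ℝ)
    (Z : Matrix (Fin n) (Fin n) ℝ) (V : Fin n → Matrix (Fin d) (Fin q) ℝ) :
    |QForm W (lap Z) V| ≤ frob Z * (collFrob W * (√n * collFrob V)) := by
  have h := Real.abs_le_sqrt (sq_QForm_lap_le W Z V)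
  rwa [Real.sqrt_mul (frobSq_nonneg Z), Real.sqrt_mul (collFrobSq_nonneg W),
    Real.sqrt_mul n.cast_nonneg] at h

lemma sqrt_mul_mul_mul_le {a b : ℝ} (ha : 0 ≤ a) (hb : 0 ≤ b) (x y : ℝ) :
    √(a * b) * (x * y) ≤ a / 2 * x ^ 2 + b / 2 * y ^ 2 := by
  have h := two_mul_le_add_sq (√a * x) (√b * y)
  rw [mul_pow, mul_pow, Real.sq_sqrt ha, Real.sq_sqrt hb] at h
  rw [Real.sqrt_mul ha]
  linarith

theorem stmt10_general {n d q : ℕ} {κ ν lam : ℝ} (hκ : 0 ≤ κ) (hν : 0 ≤ ν) (hlam : 0 ≤ lam)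
    {S : Matrix (Fin n) (Fin n) ℝ} (hS : ∀ i, ∑ j, S i j = ∑ j, S j i) (hpos : ∀ i j, 0 ≤ S i j)
    {W₀ : Fin n → Matrix (Fin d) (Fin q) ℝ} (hW₀ : 2 * lam * √n * collFrob W₀ ≤ √(ν * κ))
    (Z : Matrix (Fin n) (Fin n) ℝ) (W : Fin n → Matrix (Fin d) (Fin q) ℝ) :
    0 ≤ ν / 2 * frobSq Z + κ / 2 * collFrobSq W
        + lam * (2 * QForm W (lap Z) W₀ + QForm W (lap S) W) := by
  have hsemidef : 0 ≤ lam * QForm W (lap S) W := mul_nonneg hlam (QForm_lap_self_nonneg hS hpos W)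
  have hcross : -(2 * lam * QForm W (lap Z) W₀) ≤ ν / 2 * frobSq Z + κ / 2 * collFrobSq W :=
    calc -(2 * lam * QForm W (lap Z) W₀) = 2 * lam * -QForm W (lap Z) W₀ := by ring
      _ ≤ 2 * lam * (frob Z * (collFrob W * (√n * collFrob W₀))) := by
          gcongr
          exact (neg_le_abs _).trans (abs_QForm_lap_le W Z W₀)
      _ = 2 * lam * √n * collFrob W₀ * (frob Z * collFrob W) := by ring
      _ ≤ √(ν * κ) * (frob Z * collFrob W) :=
          mul_le_mul_of_nonneg_right hW₀ (mul_nonneg (frob_nonneg Z) (collFrob_nonneg W))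
      _ ≤ ν / 2 * frob Z ^ 2 + κ / 2 * collFrob W ^ 2 := sqrt_mul_mul_mul_le hν hκ _ _
      _ = ν / 2 * frobSq Z + κ / 2 * collFrobSq W := by rw [sq_frob, sq_collFrob]
  linarith

/-- If `‖W₀‖_F ≤ √(νκ)/(2λ(√n+1))` then the quadratic part `R(Z,W)` of
`Ψ(A+Z₀+Z, W₀+W)` is nonnegative for all directions `(Z,W)`. -/
theorem stmt10 (n d q : ℕ) (hn : 0 < n) (hd : 0 < d) (hq : 0 < q)
    (κ ν lam : ℝ) (hκ : 0 < κ) (hν : 0 < ν) (hlam : 0 < lam)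
    (A Z₀ : Matrix (Fin n) (Fin n) ℝ) (hsymm : (A + Z₀).IsSymm)
    (hpos : ∀ i j, 0 ≤ (A + Z₀) i j)
    (W₀ : Fin n → Matrix (Fin d) (Fin q) ℝ)
    (hW₀ : collFrob W₀ ≤ Real.sqrt (ν * κ) / (2 * lam * (Real.sqrt n + 1))) :
    ∀ (Z : Matrix (Fin n) (Fin n) ℝ) (W : Fin n → Matrix (Fin d) (Fin q) ℝ),
      0 ≤ ν / 2 * frobSq Z + κ / 2 * collFrobSq W
          + lam * (2 * QForm W (lap Z) W₀ + QForm W (lap (A + Z₀)) W) := by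
  rw [le_div_iff₀' (by positivity)] at hW₀
  exact stmt10_general hκ.le hν.le hlam.le
    (fun i => Finset.sum_congr rfl fun j _ => hsymm.apply j i) hpos
    (by linarith [mul_nonneg hlam.le (collFrob_nonneg W₀)])
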